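/- For the sequence (n_k)_{k≥1} of the explicit construction and for all a, b ∈ ℕ with a ≠ b, there is a constant C (depending only on ε, R, d, a, b) such that for all N ≥ 2 and all integers c ≥ 0 one has L(N,a,b,c) ≤ C·N/(log N)^{1−ε}. -/

import Mathlib

open Real MeasureTheory Filter Finset

noncomputable section

/-- The block `Δ_i` of `R^i` consecutive positive integers. -/
def Block (R i : ℕ) : Finset ℕ :=
  Finset.Icc ((R ^ i - R) / (R - 1) + 1) ((R ^ (i + 1) - R) / (R - 1))

/-- `M(i) = ⌈i^(1-ε)⌉`. -/
def Mfun (ε : ℝ) (i : ℕ) : ℕ := ⌈(i : ℝ) ^ (1 - ε)⌉₊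

/-- The explicit construction: parameters `ε ∈ (0,1)`, an integer `R > 8/ε`, an integer
`d ≥ 1`, for each `i ≥ 1` a partition of `Δ_i` into consecutive intervals of integers
`Δ_i^(1) < ⋯ < Δ_i^(M(i))` (element-wise) of essentially equal cardinality, and the
sequence `n_k := 2^(2^(i^4)) * (2^k + m)` for `k ∈ Δ_i^(m)`. -/
structure ExplicitConstruction where
  ε : ℝ
  R : ℕ
  d : ℕ
  sub : ℕ → ℕ → Finset ℕ
  n : ℕ → ℕ
  hε : ε ∈ Set.Ioo (0 : ℝ) 1
  hR : 8 / ε < (R : ℝ)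
  hd : 1 ≤ d
  hpart : ∀ i, 1 ≤ i → Block R i = (Finset.Icc 1 (Mfun ε i)).biUnion (sub i)
  hconsec : ∀ i, 1 ≤ i → ∀ m ∈ Finset.Icc 1 (Mfun ε i), ∃ lo hi, sub i m = Finset.Icc lo hi
  horder : ∀ i, 1 ≤ i → ∀ m ∈ Finset.Icc 1 (Mfun ε i), ∀ m' ∈ Finset.Icc 1 (Mfun ε i),
    m < m' → ∀ k ∈ sub i m, ∀ l ∈ sub i m', k < l
  hcard : ∀ i, 1 ≤ i → ∀ m ∈ Finset.Icc 1 (Mfun ε i),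
    |((sub i m).card : ℝ) - (R : ℝ) ^ i / (Mfun ε i : ℝ)| ≤ 1
  hn : ∀ i, 1 ≤ i → ∀ m ∈ Finset.Icc 1 (Mfun ε i), ∀ k ∈ sub i m,
    n k = 2 ^ 2 ^ i ^ 4 * (2 ^ k + m)

/-!
Two solutions of `a n_k - b n_ℓ = c` differ by a pair of increments, so lacunarity forces
`n_k ≍ n_ℓ` for every solution except the one with least `k`. Because the factors `2^(2^(i⁴))` grow
so fast, `k` and `ℓ` are then bounded, or lie in a common block `Δ_i` at bounded distance.

Inside `Δ_i`, solutions with `k` and `ℓ` in different subintervals have `k` near an endpoint, so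
there are `O(M(i))` of them. For `k, ℓ ∈ Δ_i^(m)` the equation says that
`(a 2^k - b 2^ℓ) + (a - b) m` has a prescribed value. Fix the shift `ℓ - k`. If `a 2^k - b 2^ℓ`
vanishes for one solution with this shift, it vanishes for all of them, so `m` is determined and
there are at most `#Δ_i^(m) ≈ R^i / M(i)` solutions; otherwise it determines `k` once `m` is known,
so there are at most `M(i)` solutions. The sum of `R^i / i^(1-ε)` over the blocks meeting `[1, N]`
is dominated by its last term, which is of order `N / (log N)^(1-ε)`.
-/

section Finset

variable {α β : Type*} [LinearOrder β]

lemma card_le_one_add_card_filter_exists_lt {s : Finset α} {f : α → β} (hf : Set.InjOn f s) :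
    #s ≤ 1 + #{x ∈ s | ∃ y ∈ s, f y < f x} := by
  rw [← card_filter_add_card_filter_not (fun x => ∃ y ∈ s, f y < f x), add_comm]
  refine Nat.add_le_add_right (card_le_one.2 fun x hx y hy => ?_) _
  simp only [mem_filter, not_exists, not_and, not_lt] at hx hy
  exact hf hx.1 hy.1 (le_antisymm (hx.2 y hy.1) (hy.2 x hx.1))

lemma card_filter_le_of_injOn_of_one_le {s : Finset α} {f : α → ℕ} (hf : Set.InjOn f s)
    (hpos : ∀ x ∈ s, 1 ≤ f x) (K : ℕ) : #{x ∈ s | f x ≤ K} ≤ K := by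
  have hmaps : ∀ x ∈ {x ∈ s | f x ≤ K}, f x ∈ Icc 1 K := fun x hx =>
    mem_Icc.2 ⟨hpos x (mem_filter.1 hx).1, (mem_filter.1 hx).2⟩
  simpa using card_le_card_of_injOn f hmaps (hf.mono (coe_subset.2 (filter_subset _ _)))

end Finset

section Solutions

/-- The pairs counted by `L(N, a, b, c)`: solutions of `a n_k - b n_ℓ = c` with `1 ≤ k, ℓ ≤ N`. -/
def solutions (n : ℕ → ℕ) (a b N : ℕ) (c : ℤ) : Finset (ℕ × ℕ) :=
  {p ∈ Icc 1 N ×ˢ Icc 1 N | (a : ℤ) * (n p.1 : ℤ) - (b : ℤ) * (n p.2 : ℤ) = c}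

/-- The Hadamard gap condition with ratio `1 + 1/q`, in a division-free form, for a sequence of
positive integers indexed from `1`. -/
structure IsLacunary (q : ℕ) (n : ℕ → ℕ) : Prop where
  pos : ∀ k, 1 ≤ k → 0 < n k
  gap : ∀ k, 1 ≤ k → (q + 1) * n k ≤ q * n (k + 1)

variable {n : ℕ → ℕ} {q a b N : ℕ} {c : ℤ} {p p' : ℕ × ℕ}

lemma mem_solutions : p ∈ solutions n a b N c ↔ (p.1 ∈ Icc 1 N ∧ p.2 ∈ Icc 1 N) ∧
    (a : ℤ) * n p.1 - b * n p.2 = c := by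
  rw [solutions, mem_filter, mem_product]

lemma swap_mem_solutions : p.swap ∈ solutions n b a N (-c) ↔ p ∈ solutions n a b N c := by
  simp only [mem_solutions, Prod.fst_swap, Prod.snd_swap, and_comm]
  constructor <;> rintro ⟨h, hmem⟩ <;> exact ⟨by linarith, hmem⟩

lemma one_le_fst_of_mem_solutions (hp : p ∈ solutions n a b N c) : 1 ≤ p.1 :=
  (mem_Icc.1 (mem_solutions.1 hp).1.1).1

lemma one_le_snd_of_mem_solutions (hp : p ∈ solutions n a b N c) : 1 ≤ p.2 :=
  (mem_Icc.1 (mem_solutions.1 hp).1.2).1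

lemma add_eq_add_of_mem_solutions (hp : p ∈ solutions n a b N c)
    (hp' : p' ∈ solutions n a b N c) :
    a * n p.1 + b * n p'.2 = a * n p'.1 + b * n p.2 := by
  have heq := (mem_solutions.1 hp).2.trans (mem_solutions.1 hp').2.symm
  zify
  linarith

lemma injOn_fst_solutions (hn : Set.InjOn n (Set.Ici 1)) (hb : 1 ≤ b) :
    Set.InjOn Prod.fst (solutions n a b N c : Set (ℕ × ℕ)) := by
  intro p hp p' hp' hfst
  have heq := add_eq_add_of_mem_solutions hp hp'
  rw [hfst, Nat.add_left_cancel_iff] at heq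
  exact Prod.ext hfst (hn (one_le_snd_of_mem_solutions hp) (one_le_snd_of_mem_solutions hp')
    (Nat.eq_of_mul_eq_mul_left hb heq).symm)

lemma injOn_snd_solutions (hn : Set.InjOn n (Set.Ici 1)) (ha : 1 ≤ a) :
    Set.InjOn Prod.snd (solutions n a b N c : Set (ℕ × ℕ)) := fun _ hp _ hp' hsnd =>
  Prod.swap_injective <| injOn_fst_solutions hn ha (swap_mem_solutions.2 hp)
    (swap_mem_solutions.2 hp') hsnd

namespace IsLacunary

lemma strictMonoOn (hn : IsLacunary q n) : StrictMonoOn n (Set.Ici 1) :=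
  strictMonoOn_of_lt_add_one Set.ordConnected_Ici fun k _ hk _ => by
    have hpos := hn.pos k hk
    have hgap := hn.gap k hk
    by_contra! hle
    nlinarith

lemma gap_of_lt (hn : IsLacunary q n) {k l : ℕ} (hk : 1 ≤ k) (hkl : k < l) :
    (q + 1) * n k ≤ q * n l :=
  (hn.gap k hk).trans <| Nat.mul_le_mul_left q <|
    hn.strictMonoOn.monotoneOn (Set.mem_Ici.2 (by omega)) (Set.mem_Ici.2 (by omega)) hkl

lemma snd_lt_snd_of_mem_solutions (hn : IsLacunary q n) (ha : 1 ≤ a)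
    (hp : p ∈ solutions n a b N c) (hp' : p' ∈ solutions n a b N c) (hlt : p.1 < p'.1) :
    p.2 < p'.2 := by
  have hn_lt := hn.strictMonoOn (one_le_fst_of_mem_solutions hp) (one_le_fst_of_mem_solutions hp')
    hlt
  by_contra! hle
  have hn_le := hn.strictMonoOn.monotoneOn (one_le_snd_of_mem_solutions hp')
    (one_le_snd_of_mem_solutions hp) hle
  have heq := add_eq_add_of_mem_solutions hp hp'
  nlinarith

lemma mul_fst_le_of_mem_solutions (hn : IsLacunary q n) (hp : p ∈ solutions n a b N c)
    (hp' : p' ∈ solutions n a b N c) (hlt : p.1 < p'.1) :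
    a * n p'.1 ≤ (q + 1) * (b * n p'.2) := by
  have hgap := Nat.mul_le_mul_left a (hn.gap_of_lt (one_le_fst_of_mem_solutions hp) hlt)
  have hle : a * n p'.1 ≤ a * n p.1 + b * n p'.2 :=
    (Nat.le_add_right _ _).trans (add_eq_add_of_mem_solutions hp hp').ge
  have := Nat.mul_le_mul_left (q + 1) hle
  linarith

lemma comparable_of_mem_solutions (hn : IsLacunary q n) (ha : 1 ≤ a) (hb : 1 ≤ b)
    (hp : p ∈ solutions n a b N c) (hp' : p' ∈ solutions n a b N c) (hlt : p.1 < p'.1) :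
    n p'.1 ≤ (q + 1) * (a + b) * n p'.2 ∧ n p'.2 ≤ (q + 1) * (a + b) * n p'.1 := by
  have hfst := hn.mul_fst_le_of_mem_solutions hp hp' hlt
  have hsnd := hn.mul_fst_le_of_mem_solutions (swap_mem_solutions.2 hp)
    (swap_mem_solutions.2 hp') (hn.snd_lt_snd_of_mem_solutions ha hp hp' hlt)
  constructor
  · calc n p'.1 ≤ a * n p'.1 := Nat.le_mul_of_pos_left _ ha
      _ ≤ (q + 1) * (b * n p'.2) := hfst
      _ ≤ (q + 1) * ((a + b) * n p'.2) := by gcongr; omega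
      _ = (q + 1) * (a + b) * n p'.2 := by ring
  · calc n p'.2 ≤ b * n p'.2 := Nat.le_mul_of_pos_left _ hb
      _ ≤ (q + 1) * (a * n p'.1) := hsnd
      _ ≤ (q + 1) * ((a + b) * n p'.1) := by gcongr; omega
      _ = (q + 1) * (a + b) * n p'.1 := by ring

end IsLacunary

end Solutions

section Block

/-- The number of positive integers preceding the block `Δ_i`, for `i ≥ 1`. -/
def blockStart (R i : ℕ) : ℕ := ∑ j ∈ Ico 1 i, R ^ j

variable {R i j k l : ℕ}

lemma blockStart_eq_div (hR : 2 ≤ R) (hi : 1 ≤ i) : blockStart R i = (R ^ i - R) / (R - 1) := by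
  refine (Nat.div_eq_of_eq_mul_left (by omega) ?_).symm
  have hpow : R ≤ R ^ i := Nat.le_self_pow (by omega) R
  have hgeom := geom_sum_Ico_mul (R : ℤ) hi
  rw [pow_one] at hgeom
  zify [hpow, show 1 ≤ R by omega]
  simpa [blockStart] using hgeom.symm

lemma Block_eq_Ioc (hR : 2 ≤ R) (hi : 1 ≤ i) :
    Block R i = Ioc (blockStart R i) (blockStart R (i + 1)) := by
  rw [Block, ← blockStart_eq_div hR hi, ← blockStart_eq_div hR (by omega)]
  exact Icc_succ_left_eq_Ioc _ _

lemma blockStart_mono (R : ℕ) : Monotone (blockStart R) := fun _ _ hij =>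
  sum_le_sum_of_subset (Ico_subset_Ico_right hij)

lemma le_blockStart_add_one (hR : 1 ≤ R) (i : ℕ) : i ≤ blockStart R i + 1 := by
  have hcard : #(Ico 1 i) • 1 ≤ blockStart R i :=
    card_nsmul_le_sum _ _ _ fun j _ => Nat.one_le_pow j R hR
  rw [Nat.card_Ico, smul_eq_mul] at hcard
  omega

lemma blockStart_lt_pow (hR : 2 ≤ R) (i : ℕ) : blockStart R i < R ^ i :=
  Nat.geomSum_lt hR fun _ hj => (mem_Ico.1 hj).2

lemma pow_le_mul_blockStart_add_one (hi : 1 ≤ i) : R ^ i ≤ R * (blockStart R i + 1) := by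
  obtain ⟨j, rfl⟩ := Nat.exists_eq_add_of_le' hi
  rw [pow_succ']
  refine Nat.mul_le_mul_left R ?_
  rcases j.eq_zero_or_pos with rfl | hj
  · simp
  · exact (single_le_sum (f := fun j => R ^ j) (fun _ _ => Nat.zero_le _)
      (mem_Ico.2 ⟨hj, j.lt_succ_self⟩)).trans (Nat.le_succ _)

lemma exists_mem_Block (hR : 2 ≤ R) (hk : 1 ≤ k) : ∃ i, 1 ≤ i ∧ k ∈ Block R i := by
  have hk_le : k ≤ blockStart R (k + 1) := by
    have := le_blockStart_add_one (R := R) (by omega) (k + 1)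
    omega
  have hmem : k ∈ Set.Ioc (blockStart R 1) (blockStart R (k + 1)) := ⟨hk, hk_le⟩
  rw [← (blockStart_mono R).biUnion_Ico_Ioc_map_succ, Set.mem_iUnion₂] at hmem
  obtain ⟨i, hi, hki⟩ := hmem
  exact ⟨i, hi.1, by simpa [Block_eq_Ioc hR hi.1] using hki⟩

lemma le_of_mem_Block_of_le (hR : 2 ≤ R) (hi : 1 ≤ i) (hj : 1 ≤ j) (hk : k ∈ Block R i)
    (hl : l ∈ Block R j) (hkl : k ≤ l) : i ≤ j := by
  rw [Block_eq_Ioc hR hi, mem_Ioc] at hk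
  rw [Block_eq_Ioc hR hj, mem_Ioc] at hl
  by_contra! hji
  have := blockStart_mono R (Nat.succ_le_of_lt hji)
  rw [Nat.succ_eq_add_one] at this
  omega

/-- The pairs of indices in the block `Δ_i` whose entries differ by at most `D`. -/
def blockDiagonal (R D i : ℕ) : Finset (ℕ × ℕ) :=
  {p ∈ Block R i ×ˢ Block R i | p.1 ≤ p.2 + D ∧ p.2 ≤ p.1 + D}

lemma mem_blockDiagonal {D : ℕ} {p : ℕ × ℕ} : p ∈ blockDiagonal R D i ↔
    (p.1 ∈ Block R i ∧ p.2 ∈ Block R i) ∧ p.1 ≤ p.2 + D ∧ p.2 ≤ p.1 + D := by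
  rw [blockDiagonal, mem_filter, mem_product]

end Block

section Weights

variable {R ε s : ℝ} {i : ℕ}

lemma natCast_le_pow_div_rpow (hR : 4 ≤ R) (hs : s ≤ 1) (hi : 1 ≤ i) :
    (i : ℝ) ≤ R ^ i / (i : ℝ) ^ s := by
  have hi_real : (1 : ℝ) ≤ i := by exact_mod_cast hi
  have hi_le : (i : ℝ) ≤ 2 ^ i := by exact_mod_cast i.lt_two_pow_self.le
  rw [le_div_iff₀ (by positivity)]
  calc (i : ℝ) * (i : ℝ) ^ s ≤ i * i := by gcongr; exact rpow_le_self_of_one_le hi_real hs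
    _ ≤ 2 ^ i * 2 ^ i := by gcongr
    _ = 4 ^ i := by rw [← mul_pow]; norm_num
    _ ≤ R ^ i := by gcongr

lemma two_mul_pow_div_rpow_le_succ (hR : 4 ≤ R) (hs : 0 ≤ s) (hs1 : s ≤ 1) (hi : 1 ≤ i) :
    2 * (R ^ i / (i : ℝ) ^ s) ≤ R ^ (i + 1) / ((i + 1 : ℕ) : ℝ) ^ s := by
  have hi_real : (1 : ℝ) ≤ i := by exact_mod_cast hi
  have hrpow : ((i + 1 : ℕ) : ℝ) ^ s ≤ 2 * (i : ℝ) ^ s :=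
    calc ((i + 1 : ℕ) : ℝ) ^ s ≤ (2 * (i : ℝ)) ^ s := by gcongr; push_cast; linarith
      _ = 2 ^ s * (i : ℝ) ^ s := mul_rpow (by norm_num) (by positivity)
      _ ≤ 2 * (i : ℝ) ^ s := by gcongr; exact rpow_le_self_of_one_le (by norm_num) hs1
  rw [← mul_div_assoc, div_le_div_iff₀ (by positivity) (by positivity)]
  calc 2 * R ^ i * ((i + 1 : ℕ) : ℝ) ^ s ≤ 2 * R ^ i * (2 * (i : ℝ) ^ s) := by gcongr
    _ = R ^ i * 4 * (i : ℝ) ^ s := by ring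
    _ ≤ R ^ i * R * (i : ℝ) ^ s := by gcongr
    _ = R ^ (i + 1) * (i : ℝ) ^ s := by rw [pow_succ]

lemma sum_pow_div_rpow_le (hR : 4 ≤ R) (hs : 0 ≤ s) (hs1 : s ≤ 1) {I : ℕ} (hI : 1 ≤ I) :
    ∑ i ∈ Icc 1 I, R ^ i / (i : ℝ) ^ s ≤ 2 * (R ^ I / (I : ℝ) ^ s) := by
  induction I, hI using Nat.le_induction with
  | base =>
    rw [Icc_self, sum_singleton]
    linarith [natCast_le_pow_div_rpow hR hs1 le_rfl]
  | succ I hI ih =>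
    rw [sum_Icc_succ_top (by omega)]
    linarith [two_mul_pow_div_rpow_le_succ hR hs hs1 hI]

lemma pow_div_rpow_le_of_mem_Block {R N : ℕ} (hR : 2 ≤ R) (hs : 0 ≤ s) (hi : 1 ≤ i) (hN : 2 ≤ N)
    (hmem : N ∈ Block R i) :
    (R : ℝ) ^ i / (i : ℝ) ^ s ≤ R * (2 * log R) ^ s * N / log N ^ s := by
  rw [Block_eq_Ioc hR hi, mem_Ioc] at hmem
  have hi_real : (1 : ℝ) ≤ i := by exact_mod_cast hi
  have hlogN : 0 < log N := log_pos (by exact_mod_cast hN)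
  have hlogR : 0 < log R := log_pos (by exact_mod_cast hR)
  have hpow : (R : ℝ) ^ i ≤ R * N := by
    exact_mod_cast (pow_le_mul_blockStart_add_one hi).trans (Nat.mul_le_mul_left _ hmem.1)
  have hlog : log N ≤ 2 * log R * i := by
    have hN_le : (N : ℝ) ≤ (R : ℝ) ^ (i + 1) := by
      exact_mod_cast hmem.2.trans (blockStart_lt_pow hR _).le
    calc log N ≤ log ((R : ℝ) ^ (i + 1)) := log_le_log (by positivity) hN_le
      _ = (i + 1) * log R := by rw [log_pow]; push_cast; rfl
      _ ≤ (i + i) * log R := by gcongr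
      _ = 2 * log R * i := by ring
  rw [div_le_div_iff₀ (by positivity) (by positivity)]
  calc (R : ℝ) ^ i * log N ^ s ≤ (R * N) * (2 * log R * i) ^ s := by gcongr
    _ = (R * N) * ((2 * log R) ^ s * (i : ℝ) ^ s) := by
        rw [mul_rpow (by positivity) (by positivity)]
    _ = R * (2 * log R) ^ s * N * (i : ℝ) ^ s := by ring

lemma Mfun_le_self (hε : 0 ≤ ε) (hi : 1 ≤ i) : Mfun ε i ≤ i :=
  Nat.ceil_le.2 <| rpow_le_self_of_one_le (by exact_mod_cast hi) (by linarith)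

lemma Mfun_add_pow_div_Mfun_le (hR : 4 ≤ R) (hε : 0 ≤ ε) (hi : 1 ≤ i) :
    Mfun ε i + (R ^ i / Mfun ε i + 1) ≤ 3 * (R ^ i / (i : ℝ) ^ (1 - ε)) := by
  have hi_real : (1 : ℝ) ≤ i := by exact_mod_cast hi
  have hi_le := natCast_le_pow_div_rpow hR (by linarith : 1 - ε ≤ 1) hi
  have hM_le : (Mfun ε i : ℝ) ≤ i := by exact_mod_cast Mfun_le_self hε hi
  have hdiv : R ^ i / (Mfun ε i : ℝ) ≤ R ^ i / (i : ℝ) ^ (1 - ε) := by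
    gcongr
    exact Nat.le_ceil _
  linarith

end Weights

section PowersOfTwo

variable {a b : ℤ} {k l k' l' : ℕ}

lemma two_mul_two_pow_le_of_lt (hkl : k < l) : 2 * 2 ^ k ≤ 2 ^ l := by
  rw [← pow_succ']
  exact Nat.pow_le_pow_right two_pos hkl

lemma two_pow_mul_sub_eq (a b : ℤ) (hshift : k + l' = k' + l) :
    2 ^ k' * (a * 2 ^ k - b * 2 ^ l) = 2 ^ k * (a * 2 ^ k' - b * 2 ^ l') := by
  have hpow : (2 : ℤ) ^ k * 2 ^ l' = 2 ^ k' * 2 ^ l := by rw [← pow_add, ← pow_add, hshift]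
  linear_combination b * hpow

lemma sub_eq_zero_of_shift (hshift : k + l' = k' + l) (hzero : a * 2 ^ k - b * 2 ^ l = 0) :
    a * 2 ^ k' - b * 2 ^ l' = 0 := by
  have h := two_pow_mul_sub_eq a b hshift
  rw [hzero, mul_zero, eq_comm] at h
  exact (mul_eq_zero.1 h).resolve_left (by positivity)

lemma eq_of_sub_eq_of_shift (hshift : k + l' = k' + l) (hne : a * 2 ^ k - b * 2 ^ l ≠ 0)
    (heq : a * 2 ^ k - b * 2 ^ l = a * 2 ^ k' - b * 2 ^ l') : k = k' := by
  have h := two_pow_mul_sub_eq a b hshift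
  rw [← heq] at h
  exact Nat.pow_right_injective le_rfl (by exact_mod_cast (mul_right_cancel₀ hne h).symm)

end PowersOfTwo

namespace ExplicitConstruction

variable (E : ExplicitConstruction)

lemma nine_le_R : 9 ≤ E.R := by
  have h8 : (8 : ℝ) < E.R := by
    refine lt_trans ?_ E.hR
    rw [lt_div_iff₀ E.hε.1]
    linarith [E.hε.2]
  exact_mod_cast h8

lemma two_le_R : 2 ≤ E.R := by linarith [E.nine_le_R]

/-- `k ∈ Δ_i^(m)`, including that `i` and `m` are in the range where the construction specifies
`Δ_i^(m)`. -/
structure MemSub (i m k : ℕ) : Prop where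
  one_le : 1 ≤ i
  mem_Icc : m ∈ Icc 1 (Mfun E.ε i)
  mem_sub : k ∈ E.sub i m

variable {E} {i j m m' k l A : ℕ}

lemma exists_memSub_of_mem_Block (hi : 1 ≤ i) (hk : k ∈ Block E.R i) : ∃ m, E.MemSub i m k := by
  rw [E.hpart i hi, mem_biUnion] at hk
  obtain ⟨m, hm, hkm⟩ := hk
  exact ⟨m, hi, hm, hkm⟩

lemma exists_memSub (hk : 1 ≤ k) : ∃ i m, E.MemSub i m k := by
  obtain ⟨i, hi, hmem⟩ := exists_mem_Block E.two_le_R hk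
  exact ⟨i, exists_memSub_of_mem_Block hi hmem⟩

namespace MemSub

lemma mem_Block (hk : E.MemSub i m k) : k ∈ Block E.R i := by
  rw [E.hpart i hk.one_le]
  exact mem_biUnion.2 ⟨m, hk.mem_Icc, hk.mem_sub⟩

lemma n_eq (hk : E.MemSub i m k) : E.n k = 2 ^ 2 ^ i ^ 4 * (2 ^ k + m) :=
  E.hn i hk.one_le m hk.mem_Icc k hk.mem_sub

lemma le_two_pow (hk : E.MemSub i m k) : m ≤ 2 ^ k := by
  have hkR := hk.mem_Block
  rw [Block_eq_Ioc E.two_le_R hk.one_le, mem_Ioc] at hkR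
  calc m ≤ Mfun E.ε i := (Finset.mem_Icc.1 hk.mem_Icc).2
    _ ≤ i := Mfun_le_self E.hε.1.le hk.one_le
    _ ≤ blockStart E.R i + 1 := le_blockStart_add_one (by linarith [E.two_le_R]) i
    _ ≤ k := hkR.1
    _ ≤ 2 ^ k := k.lt_two_pow_self.le

lemma block_le_of_le (hk : E.MemSub i m k) (hl : E.MemSub j m' l) (hkl : k ≤ l) : i ≤ j :=
  le_of_mem_Block_of_le E.two_le_R hk.one_le hl.one_le hk.mem_Block hl.mem_Block hkl

lemma sub_le_of_le (hk : E.MemSub i m k) (hl : E.MemSub i m' l) (hkl : k ≤ l) : m ≤ m' := by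
  by_contra! hlt
  have := E.horder i hk.one_le m' hl.mem_Icc m hk.mem_Icc hlt l hl.mem_sub k hk.mem_sub
  omega

lemma two_pow_le_n (hk : E.MemSub i m k) : 2 ^ (2 ^ i ^ 4 + k) ≤ E.n k := by
  rw [hk.n_eq, pow_add]
  exact Nat.mul_le_mul_left _ (Nat.le_add_right _ _)

lemma n_le_two_pow (hk : E.MemSub i m k) : E.n k ≤ 2 ^ (2 ^ i ^ 4 + k + 1) := by
  rw [hk.n_eq, add_assoc, pow_add]
  refine Nat.mul_le_mul_left _ ?_
  rw [pow_succ]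
  linarith [hk.le_two_pow]

lemma exponent_le_of_n_le_mul (hk : E.MemSub i m k) (hl : E.MemSub j m' l)
    (hle : E.n k ≤ A * E.n l) : 2 ^ i ^ 4 + k ≤ 2 ^ j ^ 4 + l + (A + 1) := by
  refine (Nat.pow_le_pow_iff_right one_lt_two).1 ?_
  calc 2 ^ (2 ^ i ^ 4 + k) ≤ A * E.n l := hk.two_pow_le_n.trans hle
    _ ≤ 2 ^ A * 2 ^ (2 ^ j ^ 4 + l + 1) := Nat.mul_le_mul A.lt_two_pow_self.le hl.n_le_two_pow
    _ = 2 ^ (2 ^ j ^ 4 + l + (A + 1)) := by rw [← pow_add]; congr 1; ring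

lemma le_blockStart_of_n_le_mul (hk : E.MemSub i m k) (hl : E.MemSub j m' l)
    (hle : E.n k ≤ A * E.n l) (hji : j < i) : l ≤ blockStart E.R (A + 2) := by
  have hlk : l ≤ k := by
    by_contra! hkl
    exact hji.not_ge (hk.block_le_of_le hl hkl.le)
  have hj_le : j ≤ A := by
    have hexp := hk.exponent_le_of_n_le_mul hl hle
    have hdouble := two_mul_two_pow_le_of_lt (Nat.pow_lt_pow_left hji four_ne_zero)
    have hj : j < 2 ^ j ^ 4 := (Nat.le_self_pow (by omega) j).trans_lt Nat.lt_two_pow_self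
    omega
  have hlR := hl.mem_Block
  rw [Block_eq_Ioc E.two_le_R hl.one_le, mem_Ioc] at hlR
  exact hlR.2.trans (blockStart_mono E.R (by omega))

end MemSub

lemma small_or_mem_blockDiagonal {p : ℕ × ℕ} (hp₁ : 1 ≤ p.1) (hp₂ : 1 ≤ p.2)
    (hle : E.n p.1 ≤ A * E.n p.2) (hge : E.n p.2 ≤ A * E.n p.1) :
    p.1 ≤ blockStart E.R (A + 2) ∨ p.2 ≤ blockStart E.R (A + 2) ∨
      ∃ i, 1 ≤ i ∧ p ∈ blockDiagonal E.R (A + 1) i := by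
  obtain ⟨i, m, hk⟩ := E.exists_memSub hp₁
  obtain ⟨j, m', hl⟩ := E.exists_memSub hp₂
  rcases lt_trichotomy i j with hij | rfl | hji
  · exact .inl (hl.le_blockStart_of_n_le_mul hk hge hij)
  · have hexp := hk.exponent_le_of_n_le_mul hl hle
    have hexp' := hl.exponent_le_of_n_le_mul hk hge
    exact .inr (.inr ⟨i, hk.one_le, mem_blockDiagonal.2
      ⟨⟨hk.mem_Block, hl.mem_Block⟩, by omega, by omega⟩⟩)
  · exact .inr (.inl (hk.le_blockStart_of_n_le_mul hl hle hji))

variable (E) in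
lemma isLacunary_n : IsLacunary 2 E.n where
  pos k hk := by
    obtain ⟨i, m, hmem⟩ := E.exists_memSub hk
    rw [hmem.n_eq]
    positivity
  gap k hk := by
    obtain ⟨i, m, hmem⟩ := E.exists_memSub hk
    obtain ⟨j, m', hmem'⟩ := E.exists_memSub (k := k + 1) (by omega)
    have hm := hmem.le_two_pow
    rw [hmem.n_eq, hmem'.n_eq, pow_succ 2 k]
    rcases (hmem.block_le_of_le hmem' k.le_succ).eq_or_lt with rfl | hij
    · have hmm' := hmem.sub_le_of_le hmem' k.le_succ
      calc (2 + 1) * (2 ^ 2 ^ i ^ 4 * (2 ^ k + m)) = 2 ^ 2 ^ i ^ 4 * (3 * (2 ^ k + m)) := by ring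
        _ ≤ 2 ^ 2 ^ i ^ 4 * (2 * (2 ^ k * 2 + m')) := Nat.mul_le_mul_left _ (by omega)
        _ = 2 * (2 ^ 2 ^ i ^ 4 * (2 ^ k * 2 + m')) := by ring
    · have hfactor : 2 * 2 ^ 2 ^ i ^ 4 ≤ 2 ^ 2 ^ j ^ 4 := two_mul_two_pow_le_of_lt <|
        Nat.pow_lt_pow_right one_lt_two (Nat.pow_lt_pow_left hij four_ne_zero)
      calc (2 + 1) * (2 ^ 2 ^ i ^ 4 * (2 ^ k + m)) = 2 ^ 2 ^ i ^ 4 * (3 * (2 ^ k + m)) := by ring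
        _ ≤ 2 ^ 2 ^ i ^ 4 * (4 * (2 ^ k * 2 + m')) := Nat.mul_le_mul_left _ (by omega)
        _ = 2 * (2 * 2 ^ 2 ^ i ^ 4 * (2 ^ k * 2 + m')) := by ring
        _ ≤ 2 * (2 ^ 2 ^ j ^ 4 * (2 ^ k * 2 + m')) := by gcongr

variable (E) in
/-- Both entries of the pair `p` lie in the same subinterval `Δ_i^(m)` of the block `Δ_i`. -/
def SameSub (i : ℕ) (p : ℕ × ℕ) : Prop := ∃ m, E.MemSub i m p.1 ∧ E.MemSub i m p.2

variable {a b N D : ℕ} {c : ℤ} {G : Finset (ℕ × ℕ)} {p : ℕ × ℕ}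

lemma MemSub.near_endpoint_of_ne {lo up : ℕ} (hk : E.MemSub i m k) (hl : E.MemSub i m' l)
    (hne : m ≠ m') (hsub : E.sub i m = Icc lo up) (hkl : k ≤ l + D) (hlk : l ≤ k + D) :
    k ≤ lo + D ∨ up ≤ k + D := by
  have hk_mem := Finset.mem_Icc.1 (hsub ▸ hk.mem_sub)
  have hlo : E.MemSub i m lo := ⟨hk.one_le, hk.mem_Icc, by rw [hsub, Finset.mem_Icc]; omega⟩
  have hup : E.MemSub i m up := ⟨hk.one_le, hk.mem_Icc, by rw [hsub, Finset.mem_Icc]; omega⟩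
  rcases hne.lt_or_gt with hlt | hgt
  · have : ¬ l ≤ up := fun h => hlt.not_ge (hl.sub_le_of_le hup h)
    omega
  · have : ¬ lo ≤ l := fun h => hgt.not_ge (hlo.sub_le_of_le hl h)
    omega

lemma card_le_of_not_sameSub (hi : 1 ≤ i) (hinj : Set.InjOn Prod.fst (G : Set (ℕ × ℕ)))
    (hG : G ⊆ blockDiagonal E.R D i) (hne : ∀ p ∈ G, ¬ E.SameSub i p) :
    #G ≤ (2 * D + 2) * Mfun E.ε i := by
  have hsub : ∀ p ∈ G, ∃ m, E.MemSub i m p.1 := fun p hp =>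
    exists_memSub_of_mem_Block hi (mem_blockDiagonal.1 (hG hp)).1.1
  choose! μ hμ using hsub
  suffices hfiber : ∀ m ∈ Icc 1 (Mfun E.ε i), #{p ∈ G | μ p = m} ≤ 2 * D + 2 by
    simpa using card_le_mul_card_image_of_maps_to (fun p hp => (hμ p hp).mem_Icc) _ hfiber
  intro m hm
  obtain ⟨lo, up, hlu⟩ := E.hconsec i hi m hm
  have hmaps : ∀ p ∈ {p ∈ G | μ p = m}, p.1 ∈ Icc lo (lo + D) ∪ Icc (up - D) up := by
    intro p hp
    obtain ⟨hpG, rfl⟩ := mem_filter.1 hp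
    obtain ⟨⟨-, hp₂⟩, hle, hge⟩ := mem_blockDiagonal.1 (hG hpG)
    obtain ⟨m', hm'⟩ := exists_memSub_of_mem_Block hi hp₂
    have hmm' : μ p ≠ m' := fun h => hne p hpG ⟨μ p, hμ p hpG, h ▸ hm'⟩
    have hnear := (hμ p hpG).near_endpoint_of_ne hm' hmm' hlu hle hge
    have hp₁ := Finset.mem_Icc.1 (hlu ▸ (hμ p hpG).mem_sub)
    simp only [mem_union, Finset.mem_Icc]
    omega
  calc #{p ∈ G | μ p = m} ≤ #(Icc lo (lo + D) ∪ Icc (up - D) up) :=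
        card_le_card_of_injOn Prod.fst hmaps (hinj.mono (coe_subset.2 (filter_subset _ _)))
    _ ≤ #(Icc lo (lo + D)) + #(Icc (up - D) up) := card_union_le _ _
    _ ≤ 2 * D + 2 := by simp only [Nat.card_Icc]; omega

lemma eq_of_mem_solutions_of_memSub (hp : p ∈ solutions E.n a b N c) (h₁ : E.MemSub i m p.1)
    (h₂ : E.MemSub i m p.2) :
    c = 2 ^ 2 ^ i ^ 4 * ((a * 2 ^ p.1 - b * 2 ^ p.2) + (a - b) * m) := by
  rw [← (mem_solutions.1 hp).2, h₁.n_eq, h₂.n_eq]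
  push_cast
  ring

lemma add_eq_add_of_mem_solutions_of_memSub {p' : ℕ × ℕ} (hp : p ∈ solutions E.n a b N c)
    (hp' : p' ∈ solutions E.n a b N c) (h₁ : E.MemSub i m p.1) (h₂ : E.MemSub i m p.2)
    (h₁' : E.MemSub i m' p'.1) (h₂' : E.MemSub i m' p'.2) :
    (a * 2 ^ p.1 - b * 2 ^ p.2 : ℤ) + (a - b) * m =
      (a * 2 ^ p'.1 - b * 2 ^ p'.2) + (a - b) * m' :=
  mul_left_cancel₀ (by positivity : (2 : ℤ) ^ 2 ^ i ^ 4 ≠ 0) <|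
    (eq_of_mem_solutions_of_memSub hp h₁ h₂).symm.trans
      (eq_of_mem_solutions_of_memSub hp' h₁' h₂')

lemma card_le_card_sub_of_eq_zero (hG : G ⊆ solutions E.n a b N c) (hne : a ≠ b ∨ c ≠ 0)
    (hsame : ∀ p ∈ G, E.SameSub i p) (hshift : ∀ p ∈ G, ∀ p' ∈ G, p.1 + p'.2 = p'.1 + p.2)
    (hp : p ∈ G) (h₁ : E.MemSub i m p.1) (h₂ : E.MemSub i m p.2)
    (hzero : (a * 2 ^ p.1 - b * 2 ^ p.2 : ℤ) = 0) : #G ≤ #(E.sub i m) := by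
  have hab : (a - b : ℤ) ≠ 0 := by
    intro hab
    have hc := eq_of_mem_solutions_of_memSub (hG hp) h₁ h₂
    rw [hzero, hab, zero_mul, add_zero, mul_zero] at hc
    exact hne.elim (fun h => h (by omega)) (fun h => h hc)
  refine card_le_card_of_injOn Prod.fst (fun p' hp' => ?_) fun p hp p' hp' hfst =>
    Prod.ext hfst (by have := hshift p hp p' hp'; omega)
  obtain ⟨m', h₁', h₂'⟩ := hsame p' hp'
  have heq := add_eq_add_of_mem_solutions_of_memSub (hG hp) (hG hp') h₁ h₂ h₁' h₂'
  rw [hzero, sub_eq_zero_of_shift (hshift p hp p' hp') hzero, zero_add, zero_add] at heq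
  have hmm' : m = m' := by exact_mod_cast mul_left_cancel₀ hab heq
  exact hmm' ▸ h₁'.mem_sub

lemma card_le_Mfun_of_ne_zero (hG : G ⊆ solutions E.n a b N c)
    (hsame : ∀ p ∈ G, E.SameSub i p) (hshift : ∀ p ∈ G, ∀ p' ∈ G, p.1 + p'.2 = p'.1 + p.2)
    (hne : ∀ p ∈ G, (a * 2 ^ p.1 - b * 2 ^ p.2 : ℤ) ≠ 0) : #G ≤ Mfun E.ε i := by
  choose! μ hμ₁ hμ₂ using hsame
  have hinj : Set.InjOn μ (G : Set (ℕ × ℕ)) := by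
    intro p hp p' hp' hμ
    have heq := add_eq_add_of_mem_solutions_of_memSub (hG hp) (hG hp') (hμ₁ p hp) (hμ₂ p hp)
      (hμ₁ p' hp') (hμ₂ p' hp')
    rw [hμ, add_left_inj] at heq
    have hfst := eq_of_sub_eq_of_shift (hshift p hp p' hp') (hne p hp) heq
    exact Prod.ext hfst (by have := hshift p hp p' hp'; omega)
  simpa using card_le_card_of_injOn μ (fun p hp => (hμ₁ p hp).mem_Icc) hinj

lemma card_le_of_shift (hG : G ⊆ solutions E.n a b N c) (hne : a ≠ b ∨ c ≠ 0)
    (hsame : ∀ p ∈ G, E.SameSub i p) (hshift : ∀ p ∈ G, ∀ p' ∈ G, p.1 + p'.2 = p'.1 + p.2) :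
    (#G : ℝ) ≤ Mfun E.ε i + ((E.R : ℝ) ^ i / Mfun E.ε i + 1) := by
  by_cases hzero : ∃ p ∈ G, (a * 2 ^ p.1 - b * 2 ^ p.2 : ℤ) = 0
  · obtain ⟨p, hp, hp_zero⟩ := hzero
    obtain ⟨m, h₁, h₂⟩ := hsame p hp
    have hle : (#G : ℝ) ≤ #(E.sub i m) := by
      exact_mod_cast card_le_card_sub_of_eq_zero hG hne hsame hshift hp h₁ h₂ hp_zero
    have hcard := (abs_le.1 (E.hcard i h₁.one_le m h₁.mem_Icc)).2
    linarith [Nat.cast_nonneg (α := ℝ) (Mfun E.ε i)]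
  · push Not at hzero
    have hle : (#G : ℝ) ≤ Mfun E.ε i := by
      exact_mod_cast card_le_Mfun_of_ne_zero hG hsame hshift hzero
    have hquot : (0 : ℝ) ≤ (E.R : ℝ) ^ i / Mfun E.ε i := by positivity
    linarith

lemma card_le_of_sameSub (hG : G ⊆ solutions E.n a b N c) (hne : a ≠ b ∨ c ≠ 0)
    (hdiag : G ⊆ blockDiagonal E.R D i) (hsame : ∀ p ∈ G, E.SameSub i p) :
    (#G : ℝ) ≤ (2 * D + 1) * (Mfun E.ε i + ((E.R : ℝ) ^ i / Mfun E.ε i + 1)) := by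
  have hdist : ∀ p ∈ G, p.1 ≤ p.2 + D ∧ p.2 ≤ p.1 + D := fun p hp =>
    (mem_blockDiagonal.1 (hdiag hp)).2
  have hmaps : ∀ p ∈ G, p.2 + D - p.1 ∈ range (2 * D + 1) := fun p hp => by
    have := hdist p hp
    rw [mem_range]
    omega
  rw [card_eq_sum_card_fiberwise (f := fun p : ℕ × ℕ => p.2 + D - p.1) hmaps]
  push_cast
  calc ∑ t ∈ range (2 * D + 1), (#{p ∈ G | p.2 + D - p.1 = t} : ℝ)
      ≤ ∑ t ∈ range (2 * D + 1), (Mfun E.ε i + ((E.R : ℝ) ^ i / Mfun E.ε i + 1)) := by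
        refine sum_le_sum fun t _ => card_le_of_shift ((filter_subset _ _).trans hG) hne
          (fun p hp => hsame p (mem_filter.1 hp).1) fun p hp p' hp' => ?_
        rw [mem_filter] at hp hp'
        have := hdist p hp.1
        have := hdist p' hp'.1
        omega
    _ = (2 * D + 1) * (Mfun E.ε i + ((E.R : ℝ) ^ i / Mfun E.ε i + 1)) := by
        rw [sum_const, card_range, nsmul_eq_mul]
        push_cast
        rfl

lemma card_solutions_inter_blockDiagonal_le (hb : 1 ≤ b) (hne : a ≠ b ∨ c ≠ 0) (hi : 1 ≤ i) :
    (#(solutions E.n a b N c ∩ blockDiagonal E.R D i) : ℝ) ≤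
      (4 * D + 3) * (Mfun E.ε i + ((E.R : ℝ) ^ i / Mfun E.ε i + 1)) := by
  classical
  set G := solutions E.n a b N c ∩ blockDiagonal E.R D i
  have hinj : Set.InjOn Prod.fst (G : Set (ℕ × ℕ)) :=
    (injOn_fst_solutions E.isLacunary_n.strictMonoOn.injOn hb).mono
      (coe_subset.2 inter_subset_left)
  have hsame : (#{p ∈ G | E.SameSub i p} : ℝ) ≤
      (2 * D + 1) * (Mfun E.ε i + ((E.R : ℝ) ^ i / Mfun E.ε i + 1)) :=
    card_le_of_sameSub ((filter_subset _ _).trans inter_subset_left) hne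
      ((filter_subset _ _).trans inter_subset_right) fun p hp => (mem_filter.1 hp).2
  have hdiff : (#{p ∈ G | ¬ E.SameSub i p} : ℝ) ≤ (2 * D + 2) * Mfun E.ε i := by
    exact_mod_cast card_le_of_not_sameSub hi (hinj.mono (coe_subset.2 (filter_subset _ _)))
      ((filter_subset _ _).trans inter_subset_right) fun p hp => (mem_filter.1 hp).2
  have hquot : (0 : ℝ) ≤ (2 * D + 2) * ((E.R : ℝ) ^ i / Mfun E.ε i + 1) := by positivity
  rw [← card_filter_add_card_filter_not (E.SameSub i)]
  push_cast
  linarith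

lemma filter_exists_lt_subset {I : ℕ} (ha : 1 ≤ a) (hb : 1 ≤ b) (hI : 1 ≤ I)
    (hN : N ∈ Block E.R I) :
    {p ∈ solutions E.n a b N c | ∃ p' ∈ solutions E.n a b N c, p'.1 < p.1} ⊆
      {p ∈ solutions E.n a b N c | p.1 ≤ blockStart E.R (3 * (a + b) + 2)} ∪
        {p ∈ solutions E.n a b N c | p.2 ≤ blockStart E.R (3 * (a + b) + 2)} ∪
          (Icc 1 I).biUnion fun i =>
            solutions E.n a b N c ∩ blockDiagonal E.R (3 * (a + b) + 1) i := by
  intro p hp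
  obtain ⟨hpS, p', hp', hlt⟩ := mem_filter.1 hp
  obtain ⟨hle, hge⟩ := E.isLacunary_n.comparable_of_mem_solutions ha hb hp' hpS hlt
  simp only [mem_union, mem_filter, mem_biUnion, mem_inter, hpS, true_and]
  rcases small_or_mem_blockDiagonal (one_le_fst_of_mem_solutions hpS)
    (one_le_snd_of_mem_solutions hpS) hle hge with hsmall | hsmall | ⟨i, hi, hdiag⟩
  · exact .inl (.inl hsmall)
  · exact .inl (.inr hsmall)
  · have hiI : i ≤ I := le_of_mem_Block_of_le E.two_le_R hi hI
      (mem_blockDiagonal.1 hdiag).1.1 hN (Finset.mem_Icc.1 (mem_solutions.1 hpS).1.1).2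
    exact .inr ⟨i, Finset.mem_Icc.2 ⟨hi, hiI⟩, hdiag⟩

lemma card_solutions_le_add_sum {I : ℕ} (ha : 1 ≤ a) (hb : 1 ≤ b) (hI : 1 ≤ I)
    (hN : N ∈ Block E.R I) :
    #(solutions E.n a b N c) ≤ 1 + 2 * blockStart E.R (3 * (a + b) + 2) +
      ∑ i ∈ Icc 1 I, #(solutions E.n a b N c ∩ blockDiagonal E.R (3 * (a + b) + 1) i) := by
  have hn := E.isLacunary_n.strictMonoOn.injOn
  have hfst := injOn_fst_solutions (a := a) (N := N) (c := c) hn hb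
  have hsnd := injOn_snd_solutions (b := b) (N := N) (c := c) hn ha
  set S := solutions E.n a b N c
  set K := blockStart E.R (3 * (a + b) + 2)
  have hsmall : #({p ∈ S | p.1 ≤ K} ∪ {p ∈ S | p.2 ≤ K}) ≤ K + K :=
    (card_union_le _ _).trans <| add_le_add
      (card_filter_le_of_injOn_of_one_le hfst (fun _ => one_le_fst_of_mem_solutions) K)
      (card_filter_le_of_injOn_of_one_le hsnd (fun _ => one_le_snd_of_mem_solutions) K)
  calc #S ≤ 1 + #{p ∈ S | ∃ p' ∈ S, p'.1 < p.1} := card_le_one_add_card_filter_exists_lt hfst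
    _ ≤ 1 + (K + K + ∑ i ∈ Icc 1 I, #(S ∩ blockDiagonal E.R (3 * (a + b) + 1) i)) := by
        grw [filter_exists_lt_subset ha hb hI hN, card_union_le, hsmall, card_biUnion_le]
    _ = _ := by ring

lemma card_solutions_le {I : ℕ} (ha : 1 ≤ a) (hb : 1 ≤ b) (hne : a ≠ b ∨ c ≠ 0) (hI : 1 ≤ I)
    (hN : N ∈ Block E.R I) :
    (#(solutions E.n a b N c) : ℝ) ≤
      (1 + 2 * blockStart E.R (3 * (a + b) + 2) + 6 * (4 * (3 * (a + b) + 1 : ℕ) + 3)) *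
        ((E.R : ℝ) ^ I / (I : ℝ) ^ (1 - E.ε)) := by
  have hR : (4 : ℝ) ≤ E.R := by exact_mod_cast (by norm_num : 4 ≤ 9).trans E.nine_le_R
  set D := 3 * (a + b) + 1
  set K := blockStart E.R (3 * (a + b) + 2)
  set Y := (E.R : ℝ) ^ I / (I : ℝ) ^ (1 - E.ε)
  have hY : 1 ≤ Y := (Nat.one_le_cast.2 hI).trans
    (natCast_le_pow_div_rpow hR (by linarith [E.hε.1]) hI)
  calc (#(solutions E.n a b N c) : ℝ)
      ≤ 1 + 2 * K + ∑ i ∈ Icc 1 I, (#(solutions E.n a b N c ∩ blockDiagonal E.R D i) : ℝ) := by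
        exact_mod_cast card_solutions_le_add_sum ha hb hI hN
    _ ≤ 1 + 2 * K +
          ∑ i ∈ Icc 1 I, (4 * D + 3) * (3 * ((E.R : ℝ) ^ i / (i : ℝ) ^ (1 - E.ε))) := by
        gcongr with i hi
        have hi1 := (Finset.mem_Icc.1 hi).1
        grw [card_solutions_inter_blockDiagonal_le hb hne hi1,
          Mfun_add_pow_div_Mfun_le hR E.hε.1.le hi1]
    _ = 1 + 2 * K +
          (4 * D + 3) * (3 * ∑ i ∈ Icc 1 I, (E.R : ℝ) ^ i / (i : ℝ) ^ (1 - E.ε)) := by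
        rw [mul_sum, mul_sum]
    _ ≤ (1 + 2 * K) * Y + (4 * D + 3) * (3 * (2 * Y)) := by
        gcongr
        · exact le_mul_of_one_le_right (by positivity) hY
        · exact sum_pow_div_rpow_le hR (by linarith [E.hε.2]) (by linarith [E.hε.1]) hI
    _ = (1 + 2 * K + 6 * (4 * D + 3)) * Y := by ring

end ExplicitConstruction

theorem statement5_general (E : ExplicitConstruction) (a b : ℕ) (ha : 1 ≤ a) (hb : 1 ≤ b) :
    ∃ C : ℝ, ∀ N : ℕ, 2 ≤ N → ∀ c : ℤ, a ≠ b ∨ c ≠ 0 →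
      (#(solutions E.n a b N c) : ℝ) ≤ C * N / log N ^ (1 - E.ε) := by
  set B : ℝ := 1 + 2 * blockStart E.R (3 * (a + b) + 2) + 6 * (4 * (3 * (a + b) + 1 : ℕ) + 3)
  refine ⟨B * (E.R * (2 * log E.R) ^ (1 - E.ε)), fun N hN c hne => ?_⟩
  obtain ⟨I, hI, hNI⟩ := exists_mem_Block E.two_le_R (by omega : 1 ≤ N)
  calc (#(solutions E.n a b N c) : ℝ)
      ≤ B * ((E.R : ℝ) ^ I / (I : ℝ) ^ (1 - E.ε)) :=
        ExplicitConstruction.card_solutions_le ha hb hne hI hNI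
    _ ≤ B * (E.R * (2 * log E.R) ^ (1 - E.ε) * N / log N ^ (1 - E.ε)) :=
        mul_le_mul_of_nonneg_left
          (pow_div_rpow_le_of_mem_Block E.two_le_R (sub_nonneg.2 E.hε.2.le) hI hN hNI)
          (by positivity)
    _ = B * (E.R * (2 * log E.R) ^ (1 - E.ε)) * N / log N ^ (1 - E.ε) := by ring

/-- Corollary 2.3: the explicit construction satisfies the Diophantine condition
`L(N,a,b,c) = O(N/(log N)^(1-ε))` uniformly in `c ≥ 0`, for all `a ≠ b`. -/
theorem statement5 (E : ExplicitConstruction) (a b : ℕ) (ha : 1 ≤ a) (hb : 1 ≤ b)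
    (hab : a ≠ b) :
    ∃ C : ℝ, ∀ N : ℕ, 2 ≤ N → ∀ c : ℤ, 0 ≤ c →
      (((Finset.Icc 1 N ×ˢ Finset.Icc 1 N).filter
          (fun p => (a : ℤ) * (E.n p.1 : ℤ) - (b : ℤ) * (E.n p.2 : ℤ) = c)).card : ℝ)
        ≤ C * N / Real.log N ^ (1 - E.ε) := by
  obtain ⟨C, hC⟩ := statement5_general E a b ha hb
  exact ⟨C, fun N hN c _ => hC N hN c (.inl hab)⟩
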